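/- arXiv:1206.0017 — 2 statements merged into one kernel-verified Lean document; each statement's English description precedes it below -/
import Mathlib

section
/- Let E and F be Banach spaces, (G₀,G₁) a Banach couple, ρ a function parameter of class ℬ^{+−}, and G a Banach space of class J_ρ(G₀,G₁). Let T be a bounded bilinear operator from E×F into G₀+G₁ such that T(E×F) ⊂ G₀∩G₁, T is compact as a bilinear map from E×F into G₀, and T is bounded from E×F into G₁. Then T is compact from E×F into G. -/
open Filter Set MeasureTheory ENNReal NNReal

noncomputable section

/-! ### Function parameters -/

/-- `rbar ρ s = sup_{t>0} ρ(s t)/ρ(t)`. -/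
def rbar (ρ : ℝ → ℝ) (s : ℝ) : ℝ := sSup {r : ℝ | ∃ t > 0, r = ρ (s * t) / ρ t}

/-- The class `ℬ` of function parameters. -/
structure IsClassB (ρ : ℝ → ℝ) : Prop where
  pos : ∀ t > 0, 0 < ρ t
  cont : ContinuousOn ρ (Set.Ioi 0)
  one : ρ 1 = 1
  bdd : ∀ s > 0, BddAbove {r : ℝ | ∃ t > 0, r = ρ (s * t) / ρ t}

/-- The class `ℬ^{+-}` of function parameters. -/
structure IsClassBpm (ρ : ℝ → ℝ) extends IsClassB ρ : Prop where
  integ : MeasureTheory.IntegrableOn (fun t => min 1 t⁻¹ * rbar ρ t * t⁻¹) (Set.Ioi 0)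

/-- Pseudo-concavity of a function parameter. -/
def IsPseudoConcave (ρ : ℝ → ℝ) : Prop :=
  ∃ C > 0, ∀ s > 0, ∀ t > 0, ρ t ≤ C * max 1 (t / s) * ρ s

/-! ### `ℓ^q` norms of two-sided sequences with values in `ℝ≥0∞` -/

/-- The `ℓ^q(ℤ)` norm of a sequence of extended reals. -/
def eLq (q : ℝ≥0∞) (a : ℤ → ℝ≥0∞) : ℝ≥0∞ :=
  if q = ∞ then ⨆ n, a n else (∑' n, a n ^ q.toReal) ^ (1 / q.toReal)

/-! ### Extended-real-valued norms -/

/-- `N : V → ℝ≥0∞` is a complete (Banach) extended norm; its finiteness set is the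
underlying Banach space. -/
structure IsENorm {V : Type*} [AddCommGroup V] [Module ℝ V] (N : V → ℝ≥0∞) : Prop where
  map_zero : N 0 = 0
  eq_zero : ∀ x, N x = 0 → x = 0
  add_le : ∀ x y, N (x + y) ≤ N x + N y
  smul : ∀ (c : ℝ) (x : V), N (c • x) = ENNReal.ofReal |c| * N x
  complete : ∀ u : ℕ → V, (∀ n, N (u n) ≠ ∞) →
    (∀ ε : ℝ, 0 < ε → ∃ n₀ : ℕ, ∀ m ≥ n₀, ∀ n ≥ n₀, N (u m - u n) < ENNReal.ofReal ε) →
    ∃ x, N x ≠ ∞ ∧ Filter.Tendsto (fun n => N (u n - x)) Filter.atTop (nhds 0)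

/-! ### Banach couples realized inside an ambient space -/

section Couple

variable {E₀ E₁ V : Type*} [NormedAddCommGroup E₀] [NormedSpace ℝ E₀]
  [NormedAddCommGroup E₁] [NormedSpace ℝ E₁] [AddCommGroup V] [Module ℝ V]

/-- The extended norm on the ambient space induced by the embedding of one Banach space:
`∞` outside the range of the embedding. -/
def enormOf {E : Type*} [NormedAddCommGroup E] [NormedSpace ℝ E] (i : E →ₗ[ℝ] V) (x : V) : ℝ≥0∞ :=
  ⨅ (a : E) (_ : i a = x), (‖a‖₊ : ℝ≥0∞)

/-- The `K`-functional of the couple `(E₀, E₁)`. -/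
def eKfun (i₀ : E₀ →ₗ[ℝ] V) (i₁ : E₁ →ₗ[ℝ] V) (t : ℝ) (x : V) : ℝ≥0∞ :=
  ⨅ (a : E₀) (b : E₁) (_ : x = i₀ a + i₁ b), ENNReal.ofReal (‖a‖ + t * ‖b‖)

/-- The extended norm of `E₀ + E₁`. -/
def esumNorm (i₀ : E₀ →ₗ[ℝ] V) (i₁ : E₁ →ₗ[ℝ] V) (x : V) : ℝ≥0∞ := eKfun i₀ i₁ 1 x

/-- The extended norm of `E₀ ∩ E₁`. -/
def einterNorm (i₀ : E₀ →ₗ[ℝ] V) (i₁ : E₁ →ₗ[ℝ] V) (x : V) : ℝ≥0∞ :=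
  max (enormOf i₀ x) (enormOf i₁ x)

/-- The extended norm of the interpolation space `(E₀,E₁)_{ρ,q;K}`. -/
def eKNorm (i₀ : E₀ →ₗ[ℝ] V) (i₁ : E₁ →ₗ[ℝ] V) (ρ : ℝ → ℝ) (q : ℝ≥0∞) (x : V) : ℝ≥0∞ :=
  eLq q (fun n => eKfun i₀ i₁ ((2 : ℝ) ^ n) x / ENNReal.ofReal (ρ ((2 : ℝ) ^ n)))

/-- `(a, b)` is a `J`-representation of `x`: `u_n = a n = b n ∈ E₀ ∩ E₁` and
`x = ∑_{n ∈ ℤ} u_n` with convergence in `E₀ + E₁`. -/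
def IsJRep (i₀ : E₀ →ₗ[ℝ] V) (i₁ : E₁ →ₗ[ℝ] V) (x : V) (a : ℤ → E₀) (b : ℤ → E₁) : Prop :=
  (∀ n, i₀ (a n) = i₁ (b n)) ∧
  ∀ ε : ℝ, 0 < ε → ∃ F : Finset ℤ, ∀ G : Finset ℤ, F ⊆ G →
    esumNorm i₀ i₁ (x - ∑ n ∈ G, i₀ (a n)) < ENNReal.ofReal ε

/-- The extended norm of the interpolation space `(E₀,E₁)_{ρ,q;J}`. -/
def eJNorm (i₀ : E₀ →ₗ[ℝ] V) (i₁ : E₁ →ₗ[ℝ] V) (ρ : ℝ → ℝ) (q : ℝ≥0∞) (x : V) : ℝ≥0∞ :=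
  ⨅ (a : ℤ → E₀) (b : ℤ → E₁) (_ : IsJRep i₀ i₁ x a b),
    eLq q (fun n => ENNReal.ofReal (max ‖a n‖ ((2 : ℝ) ^ n * ‖b n‖) / ρ ((2 : ℝ) ^ n)))

/-- `(E₀, E₁)` is a Banach couple: both spaces are complete and continuously embedded
in the Hausdorff topological vector space `V`. -/
structure IsBanachCouple [TopologicalSpace V] (i₀ : E₀ →ₗ[ℝ] V) (i₁ : E₁ →ₗ[ℝ] V) : Prop where
  t2 : T2Space V
  contAdd : ContinuousAdd V
  contSMul : ContinuousSMul ℝ V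
  complete₀ : CompleteSpace E₀
  complete₁ : CompleteSpace E₁
  inj₀ : Function.Injective i₀
  inj₁ : Function.Injective i₁
  cont₀ : Continuous i₀
  cont₁ : Continuous i₁

/-- `N` is (the extended norm of) an intermediate space for the couple `(E₀, E₁)`. -/
def IsIntermediate (i₀ : E₀ →ₗ[ℝ] V) (i₁ : E₁ →ₗ[ℝ] V) (N : V → ℝ≥0∞) : Prop :=
  IsENorm N ∧
  (∃ C > 0, ∀ x : V, N x ≤ ENNReal.ofReal C * einterNorm i₀ i₁ x) ∧
  (∃ C > 0, ∀ x : V, esumNorm i₀ i₁ x ≤ ENNReal.ofReal C * N x)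

/-- `N` is an intermediate space of class `J_ρ(E₀,E₁)`, i.e. `(E₀,E₁)_{ρ,1;J} ↪ N`. -/
def IsClassJ (i₀ : E₀ →ₗ[ℝ] V) (i₁ : E₁ →ₗ[ℝ] V) (ρ : ℝ → ℝ) (N : V → ℝ≥0∞) : Prop :=
  IsIntermediate i₀ i₁ N ∧ ∃ C > 0, ∀ x : V, N x ≤ ENNReal.ofReal C * eJNorm i₀ i₁ ρ 1 x

/-- `N` is an intermediate space of class `K_ρ(E₀,E₁)`, i.e. `N ↪ (E₀,E₁)_{ρ,∞;K}`. -/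
def IsClassK (i₀ : E₀ →ₗ[ℝ] V) (i₁ : E₁ →ₗ[ℝ] V) (ρ : ℝ → ℝ) (N : V → ℝ≥0∞) : Prop :=
  IsIntermediate i₀ i₁ N ∧ ∃ C > 0, ∀ x : V, eKNorm i₀ i₁ ρ ⊤ x ≤ ENNReal.ofReal C * N x

end Couple

/-! ### The approximation hypothesis (AP) -/

/-- The couple with extended norms `N₀, N₁` satisfies the approximation hypothesis (AP). -/
def SatisfiesAP {V : Type*} [AddCommGroup V] [Module ℝ V] (N₀ N₁ : V → ℝ≥0∞) : Prop :=
  ∃ (P Pp Pm : ℕ → V →ₗ[ℝ] V) (C : ℝ≥0∞) (c : ℕ → ℝ≥0∞),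
    0 < C ∧ C ≠ ∞ ∧ Filter.Tendsto c Filter.atTop (nhds 0) ∧
    (∀ (n : ℕ) (x y : V), N₀ x ≠ ∞ → N₁ y ≠ ∞ →
      (P n (x + y) + Pp n (x + y) + Pm n (x + y) = x + y ∧
        N₀ (P n (x + y)) ≠ ∞ ∧ N₁ (P n (x + y)) ≠ ∞)) ∧
    (∀ n x, N₀ (P n x) ≤ C * N₀ x) ∧ (∀ n x, N₁ (P n x) ≤ C * N₁ x) ∧
    (∀ n x, N₀ (Pp n x) ≤ C * N₀ x) ∧ (∀ n x, N₁ (Pp n x) ≤ C * N₁ x) ∧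
    (∀ n x, N₀ (Pm n x) ≤ C * N₀ x) ∧ (∀ n x, N₁ (Pm n x) ≤ C * N₁ x) ∧
    (∀ n x, N₀ x ≠ ∞ → N₁ (Pp n x) ≤ c n * N₀ x) ∧
    (∀ n x, N₁ x ≠ ∞ → N₀ (Pm n x) ≤ c n * N₁ x)

/-! ### Bilinear operators -/

section Bilinear

variable {VE VF VG : Type*} [AddCommGroup VG]

/-- The norm of a bilinear operator between spaces given by extended norms. -/
def eBilNorm (NE : VE → ℝ≥0∞) (NF : VF → ℝ≥0∞) (NG : VG → ℝ≥0∞) (T : VE → VF → VG) : ℝ≥0∞ :=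
  ⨆ (x : VE) (_ : NE x ≤ 1) (y : VF) (_ : NF y ≤ 1), NG (T x y)

/-- Boundedness of a bilinear operator between spaces given by extended norms. -/
def eBilBdd (NE : VE → ℝ≥0∞) (NF : VF → ℝ≥0∞) (NG : VG → ℝ≥0∞) (T : VE → VF → VG) : Prop :=
  ∃ M : ℝ≥0, ∀ x y, NG (T x y) ≤ (M : ℝ≥0∞) * NE x * NF y

/-- Compactness of a bilinear operator: the image of the product of unit balls is
totally bounded in the target. -/
def eBilCompact (NE : VE → ℝ≥0∞) (NF : VF → ℝ≥0∞) (NG : VG → ℝ≥0∞) (T : VE → VF → VG) : Prop :=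
  ∀ ε : ℝ, 0 < ε → ∃ D : Finset VG, ∀ x y, NE x ≤ 1 → NF y ≤ 1 →
    ∃ c ∈ D, NG (T x y - c) < ENNReal.ofReal ε

end Bilinear

/-! ### A generic K-functional for a couple given by two extended norms -/

/-- Generic `K`-functional for a couple described by two extended norms on `W`. -/
def eKgen {W : Type*} [AddCommGroup W] (N₀ N₁ : W → ℝ≥0∞) (t : ℝ) (x : W) : ℝ≥0∞ :=
  ⨅ y : W, (N₀ (x - y) + ENNReal.ofReal t * N₁ y)

/-- The `(ρ,q;K)`-interpolation extended norm for a couple given by two extended norms. -/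
def eKNormGen {W : Type*} [AddCommGroup W] (N₀ N₁ : W → ℝ≥0∞) (ρ : ℝ → ℝ) (q : ℝ≥0∞)
    (x : W) : ℝ≥0∞ :=
  eLq q (fun n => eKgen N₀ N₁ ((2 : ℝ) ^ n) x / ENNReal.ofReal (ρ ((2 : ℝ) ^ n)))

/-! ### Lions and Persson approximation conditions -/

section LP

variable {E₀ E₁ V : Type*} [NormedAddCommGroup E₀] [NormedSpace ℝ E₀]
  [NormedAddCommGroup E₁] [NormedSpace ℝ E₁] [AddCommGroup V] [Module ℝ V]

/-- Lions' approximation condition for the couple `(E₀, E₁)`. -/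
def LionsCondition (i₀ : E₀ →ₗ[ℝ] V) (i₁ : E₁ →ₗ[ℝ] V) : Prop :=
  ∃ P : ℕ → V →ₗ[ℝ] V,
    (∀ (n : ℕ) (a : E₀), einterNorm i₀ i₁ (P n (i₀ a)) ≠ ∞) ∧
    (∀ (n : ℕ) (b : E₁), einterNorm i₀ i₁ (P n (i₁ b)) ≠ ∞) ∧
    (∀ a : E₀, Filter.Tendsto (fun n => enormOf i₀ (P n (i₀ a) - i₀ a)) Filter.atTop (nhds 0)) ∧
    (∀ b : E₁, Filter.Tendsto (fun n => enormOf i₁ (P n (i₁ b) - i₁ b)) Filter.atTop (nhds 0))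

/-- Persson's approximation condition for the couple `(E₀, E₁)`. -/
def PerssonCondition (i₀ : E₀ →ₗ[ℝ] V) (i₁ : E₁ →ₗ[ℝ] V) : Prop :=
  ∀ K : Set E₀, IsCompact K →
    ∃ (C : ℝ) (P : Set (V →ₗ[ℝ] V)), 0 < C ∧
      (∀ p ∈ P,
        (∀ a : E₀, einterNorm i₀ i₁ (p (i₀ a)) ≠ ∞ ∧
          enormOf i₀ (p (i₀ a)) ≤ ENNReal.ofReal (C * ‖a‖)) ∧
        (∀ b : E₁, einterNorm i₀ i₁ (p (i₁ b)) ≠ ∞ ∧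
          enormOf i₁ (p (i₁ b)) ≤ ENNReal.ofReal (C * ‖b‖))) ∧
      (∀ ε > 0, ∃ p ∈ P, ∀ x ∈ K, enormOf i₀ (p (i₀ x) - i₀ x) < ENNReal.ofReal ε)

end LP

end

theorem aux_small (ρ : ℝ → ℝ) (hρ : IsClassBpm ρ) (η : ℝ) (hη : 0 < η) :
    ∃ n : ℤ, (2 : ℝ) ^ n / ρ ((2 : ℝ) ^ n) < η := by
  by_contra! hcon
  obtain ⟨z, hz, hzmax⟩ := (isCompact_Icc : IsCompact (Set.Icc (1 : ℝ) 2)).exists_isMinOn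
    ⟨1, by norm_num⟩ (hρ.cont.mono (fun x hx => lt_of_lt_of_le one_pos hx.1))
  have hzp : 0 < ρ z := hρ.pos z (lt_of_lt_of_le one_pos hz.1)
  set c : ℝ := η * ρ z / 2 with hc
  have hcp : 0 < c := by positivity
  have hint : IntegrableOn (fun t => min 1 t⁻¹ * rbar ρ t * t⁻¹) (Set.Ioi (1 : ℝ)) :=
    hρ.integ.mono_set (Set.Ioi_subset_Ioi zero_le_one)
  have key : ∀ s : ℝ, 1 < s → c * s⁻¹ ≤ min 1 s⁻¹ * rbar ρ s * s⁻¹ := by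
    intro s hs
    have hs0 : 0 < s := by linarith
    obtain ⟨m, hm1, hm2⟩ := exists_nat_pow_near hs.le (one_lt_two : (1 : ℝ) < 2)
    have h2 : (0 : ℝ) < 2 ^ m := by positivity
    have hn := hcon (-(m : ℤ))
    rw [zpow_neg, zpow_natCast] at hn
    set t : ℝ := ((2 : ℝ) ^ m)⁻¹ with ht
    have htp : 0 < t := by positivity
    have hρt := hρ.pos t htp
    have h1 : ρ (s * t) / ρ t ≤ rbar ρ s := le_csSup (hρ.bdd s hs0) ⟨t, htp, rfl⟩
    have hst : s * t ∈ Set.Icc (1 : ℝ) 2 := by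
      rw [ht, ← div_eq_mul_inv]
      constructor
      · rw [le_div_iff₀ h2]; linarith
      · rw [div_le_iff₀ h2]; rw [pow_succ] at hm2; linarith
    have h3 : ρ z ≤ ρ (s * t) := hzmax hst
    have h4 : ρ z / ρ t ≤ rbar ρ s := le_trans (by gcongr) h1
    have h5 : η * ρ t ≤ t := (le_div_iff₀ hρt).1 hn
    have h6 : ρ z * η ≤ rbar ρ s * t := by
      have : ρ z * η ≤ ρ z / ρ t * t := by
        rw [div_mul_eq_mul_div, le_div_iff₀ hρt]
        nlinarith
      exact this.trans (by gcongr)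
    have h7 : ρ z * η * s ≤ rbar ρ s * 2 := by
      have hr : 0 ≤ rbar ρ s := le_trans (by positivity) h4
      have := hst.2
      nlinarith [mul_le_mul_of_nonneg_right h6 hs0.le]
    have hmin : min 1 s⁻¹ = s⁻¹ := min_eq_right (inv_le_one_of_one_le₀ hs.le)
    rw [hmin]
    have h8 : c ≤ s⁻¹ * rbar ρ s := by
      rw [inv_mul_eq_div, le_div_iff₀ hs0, hc]; nlinarith
    gcongr
  have h9 : IntegrableOn (fun s : ℝ => c * s⁻¹) (Set.Ioi 1) := by
    refine Integrable.mono' hint (by fun_prop) ?_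
    rw [ae_restrict_iff' measurableSet_Ioi]
    refine Eventually.of_forall fun s hs => ?_
    have hs' : (1 : ℝ) < s := hs
    rw [Real.norm_of_nonneg (by positivity)]
    exact key s hs'
  have h10 := h9.const_mul c⁻¹
  refine not_integrableOn_Ioi_inv (a := 1) (h10.congr (Eventually.of_forall fun s => ?_))
  simp [← mul_assoc, inv_mul_cancel₀ hcp.ne']

theorem aux_J {E₀ E₁ V : Type*} [NormedAddCommGroup E₀] [NormedSpace ℝ E₀]
    [NormedAddCommGroup E₁] [NormedSpace ℝ E₁] [AddCommGroup V] [Module ℝ V]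
    (i₀ : E₀ →ₗ[ℝ] V) (i₁ : E₁ →ₗ[ℝ] V) (ρ : ℝ → ℝ) (n : ℤ) (α : E₀) (β : E₁)
    (h : i₀ α = i₁ β) :
    eJNorm i₀ i₁ ρ 1 (i₀ α) ≤
      ENNReal.ofReal (max ‖α‖ ((2 : ℝ) ^ n * ‖β‖) / ρ ((2 : ℝ) ^ n)) := by
  unfold eJNorm
  refine (iInf_le_of_le (Pi.single n α) (iInf_le_of_le (Pi.single n β)
    (iInf_le_of_le ⟨?_, ?_⟩ ?_)))
  · intro k
    by_cases hk : k = n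
    · subst hk; simpa using h
    · simp [Pi.single_eq_of_ne hk]
  · intro ε hε
    refine ⟨{n}, fun G hG => ?_⟩
    have hn : n ∈ G := hG (Finset.mem_singleton_self n)
    have : ∑ k ∈ G, i₀ ((Pi.single n α : ℤ → E₀) k) = i₀ α := by
      rw [Finset.sum_eq_single n]
      · simp
      · intro k _ hk; simp [Pi.single_eq_of_ne hk]
      · intro h; exact absurd hn h
    rw [this, sub_self]
    refine lt_of_le_of_lt (b := 0) ?_ (by simpa using hε)
    unfold esumNorm eKfun
    exact iInf_le_of_le 0 (iInf_le_of_le 0 (iInf_le_of_le (by simp) (by simp)))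
  · unfold eLq
    rw [if_neg ENNReal.one_ne_top]
    simp only [ENNReal.toReal_one, ENNReal.rpow_one, div_one]
    rw [tsum_eq_single n]
    · simp
    · intro k hk; simp [Pi.single_eq_of_ne hk]

theorem aux_enorm {E V : Type*} [NormedAddCommGroup E] [NormedSpace ℝ E]
    [AddCommGroup V] [Module ℝ V] (i : E →ₗ[ℝ] V) (x : V) (r : ℝ)
    (h : enormOf i x < ENNReal.ofReal r) : ∃ a, i a = x ∧ ‖a‖ < r := by
  unfold enormOf at h
  simp only [iInf_lt_iff] at h
  obtain ⟨a, ha, hr⟩ := h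
  refine ⟨a, ha, ?_⟩
  rwa [← enorm_eq_nnnorm, ← ofReal_norm_eq_enorm, ENNReal.ofReal_lt_ofReal_iff_of_nonneg (norm_nonneg _)] at hr

/-- Lions–Peetre type, same departure spaces: if `T : E × F → G₀ + G₁`
is bounded bilinear with `T(E × F) ⊆ G₀ ∩ G₁`, compact into `G₀` and bounded into
`G₁`, and `G` is of class `J_ρ(G₀,G₁)` with `ρ ∈ ℬ^{+-}`, then `T` is compact from
`E × F` into `G`. -/
theorem statement1 {E F G₀ G₁ VG : Type*}
    [NormedAddCommGroup E] [NormedSpace ℝ E] [CompleteSpace E]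
    [NormedAddCommGroup F] [NormedSpace ℝ F] [CompleteSpace F]
    [NormedAddCommGroup G₀] [NormedSpace ℝ G₀] [NormedAddCommGroup G₁] [NormedSpace ℝ G₁]
    [AddCommGroup VG] [Module ℝ VG] [TopologicalSpace VG]
    (iG₀ : G₀ →ₗ[ℝ] VG) (iG₁ : G₁ →ₗ[ℝ] VG) (hG : IsBanachCouple iG₀ iG₁)
    (ρ : ℝ → ℝ) (hρ : IsClassBpm ρ)
    (NG : VG → ℝ≥0∞) (hNG : IsClassJ iG₀ iG₁ ρ NG)
    (T : E →ₗ[ℝ] F →ₗ[ℝ] VG)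
    (hbdd : eBilBdd (fun x : E => (‖x‖₊ : ℝ≥0∞)) (fun y : F => (‖y‖₊ : ℝ≥0∞))
      (esumNorm iG₀ iG₁) (fun x y => T x y))
    (hrange : ∀ (x : E) (y : F), einterNorm iG₀ iG₁ (T x y) ≠ ∞)
    (hcpt : eBilCompact (fun x : E => (‖x‖₊ : ℝ≥0∞)) (fun y : F => (‖y‖₊ : ℝ≥0∞))
      (enormOf iG₀) (fun x y => T x y))
    (hbdd1 : eBilBdd (fun x : E => (‖x‖₊ : ℝ≥0∞)) (fun y : F => (‖y‖₊ : ℝ≥0∞))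
      (enormOf iG₁) (fun x y => T x y)) :
    eBilCompact (fun x : E => (‖x‖₊ : ℝ≥0∞)) (fun y : F => (‖y‖₊ : ℝ≥0∞)) NG
      (fun x y => T x y) := by
  classical
  intro ε hε
  obtain ⟨-, C, hC, hJ⟩ := hNG
  obtain ⟨M, hM⟩ := hbdd1
  have hM0 : (0 : ℝ) < M + 1 := by positivity
  obtain ⟨n, hn⟩ := aux_small ρ hρ (ε / (2 * C * (M + 1))) (by positivity)
  have h2n : (0 : ℝ) < 2 ^ n := by positivity
  have hρn : 0 < ρ (2 ^ n) := hρ.pos _ h2n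
  set δ : ℝ := ρ (2 ^ n) * ε / (2 * C) with hδ
  have hδ0 : 0 < δ := by positivity
  obtain ⟨D, hD⟩ := hcpt (δ / 2) (by positivity)
  have hM1 : ∀ x : E, ∀ y : F, (‖x‖₊ : ℝ≥0∞) ≤ 1 → (‖y‖₊ : ℝ≥0∞) ≤ 1 →
      ∃ b, iG₁ b = T x y ∧ ‖b‖ < (M + 1) := by
    intro x y hx hy
    apply aux_enorm
    refine lt_of_le_of_lt (hM x y) ?_
    calc (M : ℝ≥0∞) * ‖x‖₊ * ‖y‖₊ ≤ M * 1 * 1 := by gcongr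
      _ = ENNReal.ofReal M := by simp
      _ < _ := (ENNReal.ofReal_lt_ofReal_iff hM0).2 (by linarith)
  let P : VG → VG → Prop := fun c v => ∃ x : E, ∃ y : F, (‖x‖₊ : ℝ≥0∞) ≤ 1 ∧
    (‖y‖₊ : ℝ≥0∞) ≤ 1 ∧ v = T x y ∧ enormOf iG₀ (T x y - c) < ENNReal.ofReal (δ / 2)
  let φ : VG → VG := fun c => if h : ∃ v, P c v then h.choose else 0
  refine ⟨D.image φ, fun x y hx hy => ?_⟩
  obtain ⟨c, hcD, hc⟩ := hD x y hx hy
  have hex : ∃ v, P c v := ⟨_, x, y, hx, hy, rfl, hc⟩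
  have hφ : P c (φ c) := by
    have : φ c = hex.choose := dif_pos hex
    rw [this]; exact hex.choose_spec
  refine ⟨φ c, Finset.mem_image_of_mem _ hcD, ?_⟩
  obtain ⟨x', y', hx', hy', hv, hc'⟩ := hφ
  rw [hv]
  obtain ⟨a, ha, han⟩ := aux_enorm _ _ _ hc
  obtain ⟨a', ha', han'⟩ := aux_enorm _ _ _ hc'
  obtain ⟨b, hb, hbn⟩ := hM1 x y hx hy
  obtain ⟨b', hb', hbn'⟩ := hM1 x' y' hx' hy'
  have e0 : iG₀ (a - a') = T x y - T x' y' := by rw [map_sub, ha, ha']; abel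
  have e1 : iG₁ (b - b') = T x y - T x' y' := by rw [map_sub, hb, hb']
  have n0 : ‖a - a'‖ < δ := lt_of_le_of_lt (norm_sub_le _ _) (by linarith)
  have n1 : ‖b - b'‖ < 2 * (M + 1) := lt_of_le_of_lt (norm_sub_le _ _) (by linarith)
  have hle := (hJ (T x y - T x' y')).trans
    (mul_le_mul_right (e0 ▸ aux_J iG₀ iG₁ ρ n (a - a') (b - b') (e0.trans e1.symm)) _)
  refine lt_of_le_of_lt hle ?_
  rw [← ENNReal.ofReal_mul hC.le, ENNReal.ofReal_lt_ofReal_iff hε, ← mul_div_assoc,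
    div_lt_iff₀ hρn, mul_comm C, ← lt_div_iff₀ hC]
  apply max_lt
  · refine n0.trans ?_
    rw [hδ, div_lt_div_iff₀ (by positivity) hC]
    nlinarith [mul_pos (mul_pos hρn hε) hC]
  · rw [div_lt_div_iff₀ hρn (by positivity)] at hn
    calc (2 : ℝ) ^ n * ‖b - b'‖ < 2 ^ n * (2 * (M + 1)) := by gcongr
      _ < _ := by rw [lt_div_iff₀ hC]; linarith
end

section
/- Let (E₀,E₁) and (F₀,F₁) be Banach couples both satisfying the Approximation Hypothesis (AP), let ρ be a function parameter of class ℬ^{+−}, γ(t) = 1/ρ̄(t⁻¹), and let G be a Banach space. If T is a bounded bilinear operator from (E₀+E₁)×(F₀+F₁) into G which is compact from E₀×F₀ into G, then for all 1 ≤ p,q ≤ ∞, T is compact from (E₀,E₁)_{γ,p;J} × (F₀,F₁)_{ρ,q;J} into G. -/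
open Filter Set MeasureTheory ENNReal NNReal

theorem aux_le_rbar {ρ : ℝ → ℝ} (h : IsClassB ρ) {s t : ℝ} (hs : 0 < s) (ht : 0 < t) :
    ρ (s * t) ≤ rbar ρ s * ρ t := by
  have h1 : ρ (s * t) / ρ t ≤ rbar ρ s := le_csSup (h.bdd s hs) ⟨t, ht, rfl⟩
  exact (div_le_iff₀ (h.pos t ht)).1 h1

theorem aux_rbar_pos {ρ : ℝ → ℝ} (h : IsClassB ρ) {s : ℝ} (hs : 0 < s) : 0 < rbar ρ s := by
  have h1 := aux_le_rbar h hs one_pos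
  rw [h.one, mul_one, mul_one] at h1
  exact lt_of_lt_of_le (h.pos s hs) h1

theorem aux_rbar_mul {ρ : ℝ → ℝ} (h : IsClassB ρ) {s t : ℝ} (hs : 0 < s) (ht : 0 < t) :
    rbar ρ (s * t) ≤ rbar ρ s * rbar ρ t := by
  have hne : Set.Nonempty {r : ℝ | ∃ u > 0, r = ρ (s * t * u) / ρ u} := ⟨_, 1, one_pos, rfl⟩
  refine csSup_le hne ?_
  rintro r ⟨u, hu, rfl⟩
  rw [div_le_iff₀ (h.pos u hu), mul_assoc, mul_assoc]
  refine (aux_le_rbar h hs (mul_pos ht hu)).trans ?_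
  exact mul_le_mul_of_nonneg_left (aux_le_rbar h ht hu) (aux_rbar_pos h hs).le

theorem aux_rho_le {ρ : ℝ → ℝ} (h : IsClassB ρ) {s : ℝ} (hs : 0 < s) : ρ s ≤ rbar ρ s := by
  have h1 := aux_le_rbar h hs one_pos
  rwa [h.one, mul_one, mul_one] at h1

theorem aux_gamma_le {ρ : ℝ → ℝ} (h : IsClassB ρ) {s : ℝ} (hs : 0 < s) :
    (rbar ρ s⁻¹)⁻¹ ≤ rbar ρ s := by
  have h0 := aux_rbar_pos h (inv_pos.2 hs)
  rw [inv_le_iff_one_le_mul₀ h0]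
  have h1 := aux_rho_le h one_pos
  rw [h.one] at h1
  refine h1.trans ?_
  have := aux_rbar_mul h hs (inv_pos.2 hs)
  rwa [mul_inv_cancel₀ hs.ne'] at this

theorem aux_summable {ρ : ℝ → ℝ} (h : IsClassBpm ρ) :
    Summable (fun k : ℤ => min 1 ((2:ℝ) ^ k)⁻¹ * rbar ρ ((2:ℝ) ^ k)) := by
  set g : ℝ → ℝ := fun t => min 1 t⁻¹ * rbar ρ t * t⁻¹ with hg
  have hint : IntegrableOn g (Ioi 0) := h.integ
  have h2 : ∀ k : ℤ, (0:ℝ) < 2 ^ k := fun k => zpow_pos two_pos k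
  have himg : ∀ k : ℤ, (fun s : ℝ => (2:ℝ) ^ k * s) '' Ioc 1 2 = Ioc ((2:ℝ) ^ k) (2 ^ (k + 1)) := by
    intro k
    rw [Set.image_mul_left_Ioc (h2 k), mul_one, zpow_add_one₀ two_ne_zero]
  have hder : ∀ k : ℤ, ∀ x ∈ Ioc (1:ℝ) 2,
      HasDerivWithinAt (fun s : ℝ => (2:ℝ) ^ k * s) ((2:ℝ) ^ k) (Ioc 1 2) x := by
    intro k x _
    simpa using ((hasDerivAt_id x).const_mul ((2:ℝ) ^ k)).hasDerivWithinAt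
  have hinj : ∀ k : ℤ, InjOn (fun s : ℝ => (2:ℝ) ^ k * s) (Ioc 1 2) := by
    intro k x _ y _ hxy
    exact mul_left_cancel₀ (h2 k).ne' hxy
  have hsub : ∀ k : ℤ, Ioc ((2:ℝ) ^ k) (2 ^ (k + 1)) ⊆ Ioi 0 := fun k x hx => (h2 k).trans hx.1
  let F : ℤ → ℝ → ℝ≥0∞ := fun k s => ENNReal.ofReal |(2:ℝ) ^ k| * ‖g (2 ^ k * s)‖ₑ
  have hF : ∀ k, AEMeasurable (F k) (volume.restrict (Ioc 1 2)) := by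
    intro k
    have h3 : IntegrableOn g ((fun s : ℝ => (2:ℝ) ^ k * s) '' Ioc 1 2) := by
      rw [himg]; exact hint.mono_set (hsub k)
    have h4 := (integrableOn_image_iff_integrableOn_abs_deriv_smul measurableSet_Ioc (hder k)
      (hinj k) g).1 h3
    have h5 := h4.aestronglyMeasurable.enorm
    refine h5.congr ?_
    filter_upwards with s
    simp only [F, enorm_smul]
    congr 1
    rw [Real.enorm_eq_ofReal_abs, abs_abs]
  have hsum : ∫⁻ s in Ioc 1 2, ∑' k, F k s ≠ ∞ := by
    rw [lintegral_tsum hF]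
    have : ∀ k, ∫⁻ s in Ioc 1 2, F k s = ∫⁻ t in Ioc ((2:ℝ) ^ k) (2 ^ (k + 1)), ‖g t‖ₑ := by
      intro k
      rw [← himg, lintegral_image_eq_lintegral_abs_deriv_mul measurableSet_Ioc (hder k) (hinj k)]
    simp_rw [this]
    rw [← lintegral_iUnion (fun k => measurableSet_Ioc)]
    · have h6 := hint.2
      refine ne_of_lt (lt_of_le_of_lt ?_ h6)
      exact lintegral_mono_set (iUnion_subset hsub)
    · intro i j hij
      rcases lt_or_gt_of_ne hij with h | h
      · rw [Function.onFun, Set.disjoint_left]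
        intro x hx hx'
        have : (2:ℝ) ^ (i + 1) ≤ 2 ^ j := zpow_le_zpow_right₀ one_le_two (by omega)
        linarith [hx.2, hx'.1]
      · rw [Function.onFun, Set.disjoint_left]
        intro x hx hx'
        have : (2:ℝ) ^ (j + 1) ≤ 2 ^ i := zpow_le_zpow_right₀ one_le_two (by omega)
        linarith [hx'.2, hx.1]
  have hae := ae_lt_top' (AEMeasurable.tsum hF) hsum
  obtain ⟨s, hs, hs12⟩ : ∃ s, ∑' k, F k s < ∞ ∧ s ∈ Ioc (1:ℝ) 2 := by
    have h7 := hae.and (ae_restrict_mem measurableSet_Ioc)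
    have : (ae (volume.restrict (Ioc (1:ℝ) 2))).NeBot := by
      rw [ae_neBot, Ne, Measure.restrict_eq_zero]
      simp
    exact h7.exists
  have hs0 : 0 < s := by linarith [hs12.1]
  have hsm : Summable (fun k : ℤ => (2:ℝ) ^ k * g (2 ^ k * s)) := by
    have h8 := ENNReal.summable_toReal hs.ne
    refine h8.congr ?_
    intro k
    have hk := mul_pos (h2 k) hs0
    have : 0 ≤ g (2 ^ k * s) := by
      simp only [hg]
      have := (aux_rbar_pos h.toIsClassB hk).le
      positivity
    simp only [F, ENNReal.toReal_mul, toReal_enorm]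
    rw [ENNReal.toReal_ofReal (abs_nonneg _), abs_of_pos (h2 k), Real.norm_of_nonneg this]
  refine Summable.of_nonneg_of_le (fun k => ?_) (fun k => ?_) (hsm.mul_left (s * s * rbar ρ s⁻¹))
  · have := (aux_rbar_pos h.toIsClassB (h2 k)).le
    have := h2 k
    positivity
  · have hk := h2 k
    have hks := mul_pos hk hs0
    have hr := aux_rbar_pos h.toIsClassB hks
    have hr' := aux_rbar_pos h.toIsClassB (inv_pos.2 hs0)
    have e1 : rbar ρ ((2:ℝ) ^ k) ≤ rbar ρ (2 ^ k * s) * rbar ρ s⁻¹ := by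
      have := aux_rbar_mul h.toIsClassB hks (inv_pos.2 hs0)
      rwa [mul_assoc, mul_inv_cancel₀ hs0.ne', mul_one] at this
    have e2 : min 1 ((2:ℝ) ^ k)⁻¹ ≤ s * min 1 ((2:ℝ) ^ k * s)⁻¹ := by
      rw [mul_min_of_nonneg _ _ hs0.le]
      apply min_le_min
      · linarith [hs12.1]
      · rw [mul_inv, mul_comm, mul_assoc, inv_mul_cancel₀ hs0.ne', mul_one]
    have e3 : s * s * rbar ρ s⁻¹ * (2 ^ k * g (2 ^ k * s))
        = (s * min 1 ((2:ℝ) ^ k * s)⁻¹) * (rbar ρ (2 ^ k * s) * rbar ρ s⁻¹) := by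
      simp only [hg]
      generalize min 1 ((2:ℝ) ^ k * s)⁻¹ = m
      field_simp
    rw [e3]
    refine mul_le_mul e2 e1 (aux_rbar_pos h.toIsClassB hk).le ?_
    positivity

theorem aux_small_s3 {ρ : ℝ → ℝ} (h : IsClassBpm ρ) (C : ℝ) (hC : 0 ≤ C) :
    (∀ δ : ℝ, 0 ≤ δ → δ ≤ 1 → Summable (fun k : ℤ =>
      2 * rbar ρ ((2:ℝ) ^ k) * min δ (C * ((2:ℝ) ^ k)⁻¹))) ∧
    (∀ δ : ℝ, 0 ≤ δ → δ ≤ 1 → Summable (fun k : ℤ =>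
      2 * rbar ρ ((2:ℝ) ^ k) * min C (δ * ((2:ℝ) ^ k)⁻¹))) ∧
    ∀ η : ℝ, 0 < η → ∃ δ : ℝ, 0 < δ ∧ δ ≤ 1 ∧
      ∑' k : ℤ, 2 * rbar ρ ((2:ℝ) ^ k) * min δ (C * ((2:ℝ) ^ k)⁻¹) < η ∧
      ∑' k : ℤ, 2 * rbar ρ ((2:ℝ) ^ k) * min C (δ * ((2:ℝ) ^ k)⁻¹) < η := by
  have h2 : ∀ k : ℤ, (0:ℝ) < 2 ^ k := fun k => zpow_pos two_pos k
  have hr : ∀ k : ℤ, 0 ≤ rbar ρ ((2:ℝ) ^ k) := fun k => (aux_rbar_pos h.toIsClassB (h2 k)).le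
  have hS := (aux_summable h).mul_left (2 * (C + 1))
  have hm : ∀ k : ℤ, (0:ℝ) ≤ min 1 ((2:ℝ) ^ k)⁻¹ := fun k => by have := h2 k; positivity
  have key : ∀ k : ℤ, ∀ x : ℝ, x ≤ (C + 1) * min 1 ((2:ℝ) ^ k)⁻¹ →
      2 * rbar ρ ((2:ℝ) ^ k) * x ≤ 2 * (C + 1) * (min 1 ((2:ℝ) ^ k)⁻¹ * rbar ρ ((2:ℝ) ^ k)) := by
    intro k x hx
    have := mul_le_mul_of_nonneg_left hx (hr k)
    linarith
  have m1 : ∀ δ : ℝ, δ ≤ 1 → ∀ k : ℤ,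
      min δ (C * ((2:ℝ) ^ k)⁻¹) ≤ (C + 1) * min 1 ((2:ℝ) ^ k)⁻¹ := by
    intro δ hδ k
    rw [mul_min_of_nonneg _ _ (by linarith)]
    have := inv_pos.2 (h2 k)
    exact min_le_min (by linarith) (by nlinarith)
  have m2 : ∀ δ : ℝ, δ ≤ 1 → ∀ k : ℤ,
      min C (δ * ((2:ℝ) ^ k)⁻¹) ≤ (C + 1) * min 1 ((2:ℝ) ^ k)⁻¹ := by
    intro δ hδ k
    rw [mul_min_of_nonneg _ _ (by linarith)]
    have := inv_pos.2 (h2 k)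
    exact min_le_min (by linarith) (by nlinarith)
  have n1 : ∀ δ : ℝ, 0 ≤ δ → ∀ k : ℤ, 0 ≤ 2 * rbar ρ ((2:ℝ) ^ k) * min δ (C * ((2:ℝ) ^ k)⁻¹) := by
    intro δ hδ k
    have := hr k
    have := h2 k
    positivity
  have n2 : ∀ δ : ℝ, 0 ≤ δ → ∀ k : ℤ, 0 ≤ 2 * rbar ρ ((2:ℝ) ^ k) * min C (δ * ((2:ℝ) ^ k)⁻¹) := by
    intro δ hδ k
    have := hr k
    have := h2 k
    positivity
  have hev : ∀ᶠ δ : ℝ in nhdsWithin 0 (Ioi 0), 0 < δ ∧ δ ≤ 1 := by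
    filter_upwards [Ioc_mem_nhdsGT (zero_lt_one' ℝ)] with δ hδ using hδ
  refine ⟨fun δ h0 h1 => Summable.of_nonneg_of_le (n1 δ h0) (fun k => key k _ (m1 δ h1 k)) hS,
    fun δ h0 h1 => Summable.of_nonneg_of_le (n2 δ h0) (fun k => key k _ (m2 δ h1 k)) hS, ?_⟩
  intro η hη
  have t1 : Tendsto (fun δ : ℝ => ∑' k : ℤ, 2 * rbar ρ ((2:ℝ) ^ k) * min δ (C * ((2:ℝ) ^ k)⁻¹))
      (nhdsWithin 0 (Ioi 0)) (nhds (∑' _ : ℤ, (0:ℝ))) := by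
    refine tendsto_tsum_of_dominated_convergence hS (fun k => ?_) ?_
    · have hc : Continuous (fun δ : ℝ => 2 * rbar ρ ((2:ℝ) ^ k) * min δ (C * ((2:ℝ) ^ k)⁻¹)) := by
        fun_prop
      have := hc.tendsto 0
      have e : min 0 (C * ((2:ℝ) ^ k)⁻¹) = 0 := by
        have := h2 k
        apply min_eq_left; positivity
      rw [e, mul_zero] at this
      exact this.mono_left nhdsWithin_le_nhds
    · filter_upwards [hev] with δ hδ k
      rw [Real.norm_of_nonneg (n1 δ hδ.1.le k)]
      exact key k _ (m1 δ hδ.2 k)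
  have t2 : Tendsto (fun δ : ℝ => ∑' k : ℤ, 2 * rbar ρ ((2:ℝ) ^ k) * min C (δ * ((2:ℝ) ^ k)⁻¹))
      (nhdsWithin 0 (Ioi 0)) (nhds (∑' _ : ℤ, (0:ℝ))) := by
    refine tendsto_tsum_of_dominated_convergence hS (fun k => ?_) ?_
    · have hc : Continuous (fun δ : ℝ => 2 * rbar ρ ((2:ℝ) ^ k) * min C (δ * ((2:ℝ) ^ k)⁻¹)) := by
        fun_prop
      have := hc.tendsto 0
      rw [zero_mul, min_eq_right hC, mul_zero] at this
      exact this.mono_left nhdsWithin_le_nhds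
    · filter_upwards [hev] with δ hδ k
      rw [Real.norm_of_nonneg (n2 δ hδ.1.le k)]
      exact key k _ (m2 δ hδ.2 k)
  rw [tsum_zero] at t1 t2
  obtain ⟨δ, ⟨ha, hb⟩, hc⟩ := ((t1.eventually_lt_const hη).and
    (t2.eventually_lt_const hη) |>.and hev).exists
  exact ⟨δ, hc.1, hc.2, ha, hb⟩

theorem aux_term_le_eLq (q : ℝ≥0∞) (hq : 1 ≤ q) (a : ℤ → ℝ≥0∞) (n : ℤ) : a n ≤ eLq q a := by
  unfold eLq
  split_ifs with h
  · exact le_iSup a n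
  · have hpos : 0 < q.toReal := ENNReal.toReal_pos (by positivity) h
    rw [one_div, ENNReal.le_rpow_inv_iff hpos]
    exact ENNReal.le_tsum (f := fun n => a n ^ q.toReal) n

section AuxCouple

variable {E₀ E₁ V : Type*} [NormedAddCommGroup E₀] [NormedSpace ℝ E₀]
  [NormedAddCommGroup E₁] [NormedSpace ℝ E₁] [AddCommGroup V] [Module ℝ V]

theorem aux_enormOf_le {E : Type*} [NormedAddCommGroup E] [NormedSpace ℝ E] (i : E →ₗ[ℝ] V)
    (a : E) : enormOf i (i a) ≤ (‖a‖₊ : ℝ≥0∞) := by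
  unfold enormOf
  exact iInf_le_of_le a (iInf_le_of_le rfl le_rfl)

theorem aux_enormOf_eq {E : Type*} [NormedAddCommGroup E] [NormedSpace ℝ E] (i : E →ₗ[ℝ] V)
    (hi : Function.Injective i) (a : E) : enormOf i (i a) = (‖a‖₊ : ℝ≥0∞) := by
  refine le_antisymm (aux_enormOf_le i a) (le_iInf₂ fun b hb => ?_)
  rw [hi hb]

theorem aux_enormOf_ne_top {E : Type*} [NormedAddCommGroup E] [NormedSpace ℝ E] (i : E →ₗ[ℝ] V)
    {x : V} (hx : enormOf i x ≠ ∞) : ∃ a, i a = x := by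
  by_contra hcon
  push Not at hcon
  apply hx
  simp [enormOf, hcon]

theorem aux_enormOf_map_ne_top {E : Type*} [NormedAddCommGroup E] [NormedSpace ℝ E]
    (i : E →ₗ[ℝ] V) (a : E) : enormOf i (i a) ≠ ∞ :=
  ne_top_of_le_ne_top ENNReal.coe_ne_top (aux_enormOf_le i a)

theorem aux_sum_le (i₀ : E₀ →ₗ[ℝ] V) (i₁ : E₁ →ₗ[ℝ] V) (a : E₀) (b : E₁) :
    esumNorm i₀ i₁ (i₀ a + i₁ b) ≤ ‖a‖₊ + ‖b‖₊ := by
  unfold esumNorm eKfun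
  refine (iInf_le_of_le a (iInf_le_of_le b (iInf_le_of_le rfl le_rfl))).trans ?_
  rw [one_mul, ENNReal.ofReal_add (norm_nonneg _) (norm_nonneg _), ofReal_norm, ofReal_norm]
  rfl

theorem aux_le_sum (i₀ : E₀ →ₗ[ℝ] V) (i₁ : E₁ →ₗ[ℝ] V) (x : V) (r : ℝ≥0∞)
    (h : ∀ a b, x = i₀ a + i₁ b → r ≤ ‖a‖₊ + ‖b‖₊) : r ≤ esumNorm i₀ i₁ x := by
  unfold esumNorm eKfun
  refine le_iInf fun a => le_iInf fun b => le_iInf fun hx => ?_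
  rw [one_mul, ENNReal.ofReal_add (norm_nonneg _) (norm_nonneg _), ofReal_norm, ofReal_norm]
  exact h a b hx

theorem aux_sum_le₀ (i₀ : E₀ →ₗ[ℝ] V) (i₁ : E₁ →ₗ[ℝ] V) (x : V) :
    esumNorm i₀ i₁ x ≤ enormOf i₀ x := by
  refine le_iInf₂ fun a ha => ?_
  have := aux_sum_le i₀ i₁ a 0
  simpa [ha] using this

theorem aux_sum_le₁ (i₀ : E₀ →ₗ[ℝ] V) (i₁ : E₁ →ₗ[ℝ] V) (x : V) :
    esumNorm i₀ i₁ x ≤ enormOf i₁ x := by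
  refine le_iInf₂ fun a ha => ?_
  have := aux_sum_le i₀ i₁ 0 a
  simpa [ha] using this

theorem aux_sum_ne_top (i₀ : E₀ →ₗ[ℝ] V) (i₁ : E₁ →ₗ[ℝ] V) {x : V} (hx : esumNorm i₀ i₁ x ≠ ∞) :
    ∃ a b, x = i₀ a + i₁ b := by
  by_contra hcon
  push Not at hcon
  apply hx
  rw [← top_le_iff]
  exact aux_le_sum _ _ _ _ fun a b h => absurd h (hcon a b)

theorem aux_sum_add (i₀ : E₀ →ₗ[ℝ] V) (i₁ : E₁ →ₗ[ℝ] V) (x y : V) :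
    esumNorm i₀ i₁ (x + y) ≤ esumNorm i₀ i₁ x + esumNorm i₀ i₁ y := by
  rw [← tsub_le_iff_right]
  refine aux_le_sum i₀ i₁ _ _ fun a b hx => ?_
  rw [tsub_le_iff_right, ← tsub_le_iff_left]
  refine aux_le_sum i₀ i₁ _ _ fun a' b' hy => ?_
  rw [tsub_le_iff_left]
  have e : x + y = i₀ (a' + a) + i₁ (b' + b) := by rw [hx, hy, map_add, map_add]; abel
  rw [e]
  refine (aux_sum_le i₀ i₁ (a' + a) (b' + b)).trans ?_
  have h1 : (‖a' + a‖₊ : ℝ≥0∞) ≤ ‖a'‖₊ + ‖a‖₊ := by exact_mod_cast nnnorm_add_le a' a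
  have h2 : (‖b' + b‖₊ : ℝ≥0∞) ≤ ‖b'‖₊ + ‖b‖₊ := by exact_mod_cast nnnorm_add_le b' b
  refine (add_le_add h1 h2).trans (le_of_eq ?_)
  ring

theorem aux_sum_zero (i₀ : E₀ →ₗ[ℝ] V) (i₁ : E₁ →ₗ[ℝ] V) : esumNorm i₀ i₁ 0 = 0 := by
  have := aux_sum_le i₀ i₁ 0 0
  simpa using this

theorem aux_sum_finset (i₀ : E₀ →ₗ[ℝ] V) (i₁ : E₁ →ₗ[ℝ] V) (s : Finset ℤ) (u : ℤ → V) :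
    esumNorm i₀ i₁ (∑ k ∈ s, u k) ≤ ∑ k ∈ s, esumNorm i₀ i₁ (u k) :=
  Finset.le_sum_of_subadditive _ (aux_sum_zero i₀ i₁).le (aux_sum_add i₀ i₁) s u

theorem aux_sum_map (i₀ : E₀ →ₗ[ℝ] V) (i₁ : E₁ →ₗ[ℝ] V) (R : V →ₗ[ℝ] V) (C : ℝ≥0)
    (h₀ : ∀ x, enormOf i₀ (R x) ≤ C * enormOf i₀ x)
    (h₁ : ∀ x, enormOf i₁ (R x) ≤ C * enormOf i₁ x) (hC : C ≠ 0) (x : V) :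
    esumNorm i₀ i₁ (R x) ≤ C * esumNorm i₀ i₁ x := by
  have hC' : (C : ℝ≥0∞) ≠ 0 := by exact_mod_cast hC
  rw [← ENNReal.div_le_iff' hC' ENNReal.coe_ne_top]
  refine aux_le_sum _ _ _ _ fun a b hx => ?_
  rw [ENNReal.div_le_iff' hC' ENNReal.coe_ne_top, hx, map_add, mul_add]
  refine (aux_sum_add _ _ _ _).trans (add_le_add ?_ ?_)
  · refine (aux_sum_le₀ _ _ _).trans ((h₀ _).trans ?_)
    gcongr
    exact aux_enormOf_le _ _
  · refine (aux_sum_le₁ _ _ _).trans ((h₁ _).trans ?_)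
    gcongr
    exact aux_enormOf_le _ _

theorem aux_series (i₀ : E₀ →ₗ[ℝ] V) (i₁ : E₁ →ₗ[ℝ] V) (R : V →ₗ[ℝ] V) (C : ℝ≥0)
    (hR : ∀ x, esumNorm i₀ i₁ (R x) ≤ C * esumNorm i₀ i₁ x) (x : V) (a : ℤ → E₀) (b : ℤ → E₁)
    (hrep : IsJRep i₀ i₁ x a b) (d : ℤ → ℝ) (hd : ∀ k, 0 ≤ d k) (hds : Summable d)
    (h : ∀ k, esumNorm i₀ i₁ (R (i₀ (a k))) ≤ ENNReal.ofReal (d k)) :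
    esumNorm i₀ i₁ (R x) ≤ ENNReal.ofReal (∑' k, d k) := by
  rw [ENNReal.ofReal_tsum_of_nonneg hd hds]
  refine ENNReal.le_of_forall_pos_le_add fun ε hε _ => ?_
  have hC : (0:ℝ) < (ε / (C + 1) : ℝ≥0) := by
    have : 0 < ε / (C + 1) := by positivity
    exact_mod_cast this
  obtain ⟨G, hG⟩ := hrep.2 _ hC
  have h1 := hG G subset_rfl
  rw [ENNReal.ofReal_coe_nnreal] at h1
  have e : R x = ∑ k ∈ G, R (i₀ (a k)) + R (x - ∑ k ∈ G, i₀ (a k)) := by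
    rw [map_sub, map_sum]; abel
  rw [e]
  refine (aux_sum_add _ _ _ _).trans (add_le_add ?_ ?_)
  · refine (aux_sum_finset _ _ _ _).trans ((Finset.sum_le_sum fun k _ => h k).trans ?_)
    exact ENNReal.sum_le_tsum G
  · refine (hR _).trans ((mul_le_mul_right h1.le _).trans ?_)
    have : C * (ε / (C + 1)) ≤ ε := by
      rw [← mul_div_assoc, div_le_iff₀ (by positivity), mul_comm]
      gcongr
      simp
    exact_mod_cast this

theorem aux_closed_graph [TopologicalSpace V] (i₀ : E₀ →ₗ[ℝ] V) (i₁ : E₁ →ₗ[ℝ] V)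
    (hE : IsBanachCouple i₀ i₁) (P : V →ₗ[ℝ] V) (C : ℝ≥0)
    (h₀ : ∀ x, enormOf i₀ (P x) ≤ C * enormOf i₀ x)
    (h₁ : ∀ x, enormOf i₁ (P x) ≤ C * enormOf i₁ x)
    (hr : ∀ b : E₁, enormOf i₀ (P (i₁ b)) ≠ ∞) :
    ∃ K : ℝ≥0, ∀ a b, enormOf i₀ (P (i₀ a + i₁ b)) ≤ K * (‖a‖₊ + ‖b‖₊) := by
  have := hE.t2
  have := hE.complete₀
  have := hE.complete₁
  choose L hL using fun b => aux_enormOf_ne_top i₀ (hr b)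
  choose A hA using fun a => aux_enormOf_ne_top i₀ (x := P (i₀ a))
    (ne_top_of_le_ne_top (ENNReal.mul_ne_top ENNReal.coe_ne_top (aux_enormOf_map_ne_top i₀ a))
      (h₀ _))
  choose B hB using fun b => aux_enormOf_ne_top i₁ (x := P (i₁ b))
    (ne_top_of_le_ne_top (ENNReal.mul_ne_top ENNReal.coe_ne_top (aux_enormOf_map_ne_top i₁ b))
      (h₁ _))
  let L' : E₁ →ₗ[ℝ] E₀ :=
    { toFun := L
      map_add' := fun x y => hE.inj₀ (by simp [hL])
      map_smul' := fun c x => hE.inj₀ (by simp [hL]) }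
  let B' : E₁ →ₗ[ℝ] E₁ :=
    { toFun := B
      map_add' := fun x y => hE.inj₁ (by simp [hB])
      map_smul' := fun c x => hE.inj₁ (by simp [hB]) }
  have hBb : ∀ b, ‖B' b‖ ≤ C * ‖b‖ := by
    intro b
    have := h₁ (i₁ b)
    rw [← hB, aux_enormOf_eq i₁ hE.inj₁, aux_enormOf_eq i₁ hE.inj₁] at this
    exact_mod_cast this
  have hBc : Continuous B' := (B'.mkContinuous C hBb).continuous
  have hAb : ∀ a, ‖A a‖₊ ≤ C * ‖a‖₊ := by
    intro a
    have := h₀ (i₀ a)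
    rw [← hA, aux_enormOf_eq i₀ hE.inj₀, aux_enormOf_eq i₀ hE.inj₀] at this
    exact_mod_cast this
  have hLc : Continuous L' := by
    refine L'.continuous_of_seq_closed_graph fun u x y hu hy => hE.inj₀ ?_
    have t1 : Tendsto (fun n => i₀ (L' (u n))) atTop (nhds (i₀ y)) :=
      (hE.cont₀.tendsto y).comp hy
    have t2 : Tendsto (fun n => i₁ (B' (u n))) atTop (nhds (i₁ (B' x))) :=
      (hE.cont₁.tendsto _).comp ((hBc.tendsto x).comp hu)
    have e : (fun n => i₀ (L' (u n))) = fun n => i₁ (B' (u n)) := by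
      funext n
      exact (hL _).trans (hB _).symm
    rw [e] at t1
    have := tendsto_nhds_unique t1 t2
    rw [this]
    exact (hB x).trans (hL x).symm
  let Lc : E₁ →L[ℝ] E₀ := ⟨L', hLc⟩
  refine ⟨C + ‖Lc‖₊, fun a b => ?_⟩
  have e : P (i₀ a + i₁ b) = i₀ (A a + Lc b) := by
    rw [map_add, map_add, hA]
    congr 1
    exact (hL b).symm
  rw [e]
  refine (aux_enormOf_le _ _).trans ?_
  have h3 : ‖A a + Lc b‖₊ ≤ (C + ‖Lc‖₊) * (‖a‖₊ + ‖b‖₊) := by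
    refine (nnnorm_add_le _ _).trans ?_
    refine (add_le_add (hAb a) (Lc.le_opNNNorm b)).trans ?_
    rw [add_mul, mul_add, mul_add]
    gcongr <;> simp
  exact_mod_cast h3

theorem aux_couple [TopologicalSpace V] (i₀ : E₀ →ₗ[ℝ] V) (i₁ : E₁ →ₗ[ℝ] V)
    (hE : IsBanachCouple i₀ i₁) (hAP : SatisfiesAP (enormOf i₀) (enormOf i₁))
    (ρ : ℝ → ℝ) (hρ : IsClassBpm ρ) (w : ℝ → ℝ) (hw : ∀ t > 0, 0 < w t)
    (hwρ : ∀ t > 0, w t ≤ rbar ρ t) (q : ℝ≥0∞) (hq : 1 ≤ q) :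
    (∃ A : ℝ≥0, ∀ x, eJNorm i₀ i₁ w q x ≤ 1 → esumNorm i₀ i₁ x ≤ A) ∧
    ∀ η : ℝ≥0, 0 < η → ∃ (P : V →ₗ[ℝ] V) (K : ℝ≥0), ∀ x, eJNorm i₀ i₁ w q x ≤ 1 →
      esumNorm i₀ i₁ (x - P x) ≤ η ∧ enormOf i₀ (P x) ≤ K := by
  have h2 : ∀ k : ℤ, (0:ℝ) < 2 ^ k := fun k => zpow_pos two_pos k
  have hrep : ∀ x, eJNorm i₀ i₁ w q x ≤ 1 → ∃ a b, IsJRep i₀ i₁ x a b ∧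
      ∀ k : ℤ, ‖a k‖ ≤ 2 * rbar ρ ((2:ℝ) ^ k) ∧ ‖b k‖ ≤ 2 * rbar ρ ((2:ℝ) ^ k) * ((2:ℝ) ^ k)⁻¹ := by
    intro x hx
    have hx2 : eJNorm i₀ i₁ w q x < 2 := lt_of_le_of_lt hx (by norm_num)
    unfold eJNorm at hx2
    simp only [iInf_lt_iff] at hx2
    obtain ⟨a, b, hab, hlt⟩ := hx2
    refine ⟨a, b, hab, fun k => ?_⟩
    have h1 := (aux_term_le_eLq q hq _ k).trans hlt.le
    have h3 : max ‖a k‖ ((2:ℝ) ^ k * ‖b k‖) / w (2 ^ k) ≤ 2 := by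
      have : (2 : ℝ≥0∞) = ENNReal.ofReal 2 := by simp
      rw [this] at h1
      exact (ENNReal.ofReal_le_ofReal_iff (by norm_num)).1 h1
    rw [div_le_iff₀ (hw _ (h2 k))] at h3
    have h4 := hwρ _ (h2 k)
    have h5 : max ‖a k‖ ((2:ℝ) ^ k * ‖b k‖) ≤ 2 * rbar ρ ((2:ℝ) ^ k) := by linarith
    refine ⟨(le_max_left _ _).trans h5, ?_⟩
    rw [← div_eq_mul_inv, le_div_iff₀ (h2 k), mul_comm]
    exact (le_max_right _ _).trans h5
  have hr : ∀ k : ℤ, 0 ≤ rbar ρ ((2:ℝ) ^ k) := fun k => (aux_rbar_pos hρ.toIsClassB (h2 k)).le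
  have nn : ∀ (C δ : ℝ), 0 ≤ C → 0 ≤ δ → ∀ k : ℤ,
      0 ≤ 2 * rbar ρ ((2:ℝ) ^ k) * min C (δ * ((2:ℝ) ^ k)⁻¹) := by
    intro C δ hC hδ k
    have := hr k
    have := h2 k
    positivity
  have main : ∀ (R : V →ₗ[ℝ] V) (C : ℝ≥0) (c₀ c₁ : ℝ≥0),
      (∀ x, esumNorm i₀ i₁ (R x) ≤ C * esumNorm i₀ i₁ x) →
      (∀ a, esumNorm i₀ i₁ (R (i₀ a)) ≤ c₀ * ‖a‖₊) →
      (∀ b, esumNorm i₀ i₁ (R (i₁ b)) ≤ c₁ * ‖b‖₊) →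
      Summable (fun k : ℤ => 2 * rbar ρ ((2:ℝ) ^ k) * min (c₀:ℝ) (c₁ * ((2:ℝ) ^ k)⁻¹)) →
      ∀ x, eJNorm i₀ i₁ w q x ≤ 1 → esumNorm i₀ i₁ (R x) ≤
        ENNReal.ofReal (∑' k : ℤ, 2 * rbar ρ ((2:ℝ) ^ k) * min (c₀:ℝ) (c₁ * ((2:ℝ) ^ k)⁻¹)) := by
    intro R C c₀ c₁ hR hR0 hR1 hs x hx
    obtain ⟨a, b, hab, hk⟩ := hrep x hx
    refine aux_series i₀ i₁ R C hR x a b hab _ (nn _ _ (NNReal.coe_nonneg c₀) (NNReal.coe_nonneg c₁)) hs fun k => ?_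
    have key : ∀ (c : ℝ≥0) (n : ℝ≥0) (z : ℝ≥0∞) (r : ℝ), z ≤ c * n → (c * n : ℝ) ≤ r →
        z ≤ ENNReal.ofReal r := by
      intro c n z r h1 h2
      refine h1.trans ?_
      rw [← ENNReal.coe_mul, ← ENNReal.ofReal_coe_nnreal]
      exact ENNReal.ofReal_le_ofReal (by push_cast; exact h2)
    have hrk : 0 ≤ 2 * rbar ρ ((2:ℝ) ^ k) := by have := hr k; positivity
    rcases min_choice (c₀:ℝ) (c₁ * ((2:ℝ) ^ k)⁻¹) with hm | hm <;> rw [hm]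
    · refine key _ _ _ _ (hR0 (a k)) ?_
      rw [mul_comm]
      exact mul_le_mul_of_nonneg_right (hk k).1 (NNReal.coe_nonneg c₀)
    · rw [hab.1 k]
      refine key _ _ _ _ (hR1 (b k)) ?_
      have := mul_le_mul_of_nonneg_left (hk k).2 (NNReal.coe_nonneg c₁)
      refine this.trans (le_of_eq ?_)
      ring
  have hsum1 : ∃ A : ℝ≥0, ∀ x, eJNorm i₀ i₁ w q x ≤ 1 → esumNorm i₀ i₁ x ≤ A := by
    have hs := (aux_small_s3 hρ 1 zero_le_one).1 1 zero_le_one le_rfl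
    refine ⟨_, fun x hx => main LinearMap.id 1 1 1 (fun x => by simp) (fun a => ?_) (fun b => ?_)
      (by simpa using hs) x hx⟩
    · simpa using (aux_sum_le₀ i₀ i₁ _).trans (aux_enormOf_le i₀ a)
    · simpa using (aux_sum_le₁ i₀ i₁ _).trans (aux_enormOf_le i₁ b)
  refine ⟨hsum1, fun η hη => ?_⟩
  obtain ⟨A, hA⟩ := hsum1
  obtain ⟨P, Pp, Pm, C, c, hC0, hCt, hc, hid, hP0, hP1, hp0, hp1, hm0, hm1, hp01, hm10⟩ := hAP
  lift C to ℝ≥0 using hCt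
  have hC0' : C ≠ 0 := by
    rintro rfl
    simp at hC0
  obtain ⟨s1, s2, hδ⟩ := aux_small_s3 hρ C (NNReal.coe_nonneg C)
  obtain ⟨δ, hδ0, hδ1, ht1, ht2⟩ := hδ (η / 2) (by have : (0:ℝ) < η := hη; positivity)
  lift δ to ℝ≥0 using hδ0.le
  obtain ⟨n, hn⟩ := (hc.eventually_lt_const
    (show (0:ℝ≥0∞) < δ by exact_mod_cast hδ0)).exists
  have bp := main (Pp n) C δ C (aux_sum_map i₀ i₁ (Pp n) C (hp0 n) (hp1 n) hC0')
    (fun a => ((aux_sum_le₁ _ _ _).trans (hp01 n _ (aux_enormOf_map_ne_top i₀ a))).trans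
      (mul_le_mul' hn.le (aux_enormOf_le i₀ a)))
    (fun b => ((aux_sum_le₁ _ _ _).trans (hp1 n _)).trans
      (mul_le_mul' le_rfl (aux_enormOf_le i₁ b))) (s1 δ (NNReal.coe_nonneg δ) hδ1)
  have bm := main (Pm n) C C δ (aux_sum_map i₀ i₁ (Pm n) C (hm0 n) (hm1 n) hC0')
    (fun a => ((aux_sum_le₀ _ _ _).trans (hm0 n _)).trans
      (mul_le_mul' le_rfl (aux_enormOf_le i₀ a)))
    (fun b => ((aux_sum_le₀ _ _ _).trans (hm10 n _ (aux_enormOf_map_ne_top i₁ b))).trans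
      (mul_le_mul' hn.le (aux_enormOf_le i₁ b))) (s2 δ (NNReal.coe_nonneg δ) hδ1)
  obtain ⟨K, hK⟩ := aux_closed_graph i₀ i₁ hE (P n) C (hP0 n) (hP1 n) (fun b => by
    have := (hid n (i₀ 0) (i₁ b) (aux_enormOf_map_ne_top _ _) (aux_enormOf_map_ne_top _ _)).2.1
    simpa using this)
  refine ⟨P n, K * (A + 1), fun x hx => ?_⟩
  have hxA := hA x hx
  constructor
  · obtain ⟨a, b, hab⟩ := aux_sum_ne_top i₀ i₁ (ne_top_of_le_ne_top ENNReal.coe_ne_top hxA)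
    have e := (hid n (i₀ a) (i₁ b) (aux_enormOf_map_ne_top _ _) (aux_enormOf_map_ne_top _ _)).1
    rw [← hab] at e
    have e2 : x - P n x = Pp n x + Pm n x := by
      rw [sub_eq_iff_eq_add]
      nth_rewrite 1 [← e]
      abel
    rw [e2]
    refine (aux_sum_add _ _ _ _).trans ((add_le_add (bp x hx) (bm x hx)).trans ?_)
    rw [← ENNReal.ofReal_add (tsum_nonneg (nn _ _ (NNReal.coe_nonneg δ) (NNReal.coe_nonneg C))) (tsum_nonneg (nn _ _ (NNReal.coe_nonneg C) (NNReal.coe_nonneg δ))),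
      ← ENNReal.ofReal_coe_nnreal]
    exact ENNReal.ofReal_le_ofReal (by linarith)
  · have hlt : esumNorm i₀ i₁ x < (A + 1 : ℝ≥0) := by
      refine lt_of_le_of_lt hxA ?_
      exact_mod_cast lt_add_one A
    unfold esumNorm eKfun at hlt
    simp only [iInf_lt_iff] at hlt
    obtain ⟨a, b, hab, h3⟩ := hlt
    rw [one_mul, ENNReal.ofReal_add (norm_nonneg _) (norm_nonneg _), ofReal_norm, ofReal_norm] at h3
    rw [hab]
    refine (hK a b).trans ?_
    rw [ENNReal.coe_mul]
    exact mul_le_mul' le_rfl h3.le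

end AuxCouple

theorem aux_scale {E W : Type*} [NormedAddCommGroup E] [NormedSpace ℝ E] [AddCommGroup W]
    [Module ℝ W] (i : E →ₗ[ℝ] W) (hi : Function.Injective i) (z : W) (k : ℝ≥0)
    (hz : enormOf i z ≤ k) : enormOf i ((k + 1 : ℝ)⁻¹ • z) ≤ 1 := by
  obtain ⟨a, rfl⟩ := aux_enormOf_ne_top i (ne_top_of_le_ne_top ENNReal.coe_ne_top hz)
  rw [aux_enormOf_eq i hi] at hz
  have hz' : ‖a‖ ≤ k := by exact_mod_cast hz
  rw [← map_smul]
  refine (aux_enormOf_le _ _).trans ?_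
  have : ‖(k + 1 : ℝ)⁻¹ • a‖ ≤ 1 := by
    have hk : (0:ℝ) ≤ k := k.2
    rw [norm_smul, norm_inv, Real.norm_of_nonneg (by positivity), inv_mul_le_iff₀ (by positivity)]
    linarith
  exact_mod_cast this

/-- Lions–Peetre type with approximation hypothesis: if the Banach
couples `(E₀,E₁)` and `(F₀,F₁)` satisfy (AP), `ρ ∈ ℬ^{+-}`, `γ(t) = 1/ρ̄(t⁻¹)`, and
`T : (E₀+E₁) × (F₀+F₁) → G` is bounded bilinear and compact from `E₀ × F₀` into `G`,
then `T` is compact from `(E₀,E₁)_{γ,p;J} × (F₀,F₁)_{ρ,q;J}` into `G` for all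
`1 ≤ p, q ≤ ∞`. -/
theorem statement3 {E₀ E₁ F₀ F₁ VE VF G : Type*}
    [NormedAddCommGroup E₀] [NormedSpace ℝ E₀] [NormedAddCommGroup E₁] [NormedSpace ℝ E₁]
    [NormedAddCommGroup F₀] [NormedSpace ℝ F₀] [NormedAddCommGroup F₁] [NormedSpace ℝ F₁]
    [AddCommGroup VE] [Module ℝ VE] [TopologicalSpace VE]
    [AddCommGroup VF] [Module ℝ VF] [TopologicalSpace VF]
    [NormedAddCommGroup G] [NormedSpace ℝ G] [CompleteSpace G]
    (iE₀ : E₀ →ₗ[ℝ] VE) (iE₁ : E₁ →ₗ[ℝ] VE) (hE : IsBanachCouple iE₀ iE₁)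
    (iF₀ : F₀ →ₗ[ℝ] VF) (iF₁ : F₁ →ₗ[ℝ] VF) (hF : IsBanachCouple iF₀ iF₁)
    (hAPE : SatisfiesAP (enormOf iE₀) (enormOf iE₁))
    (hAPF : SatisfiesAP (enormOf iF₀) (enormOf iF₁))
    (ρ : ℝ → ℝ) (hρ : IsClassBpm ρ)
    (T : VE →ₗ[ℝ] VF →ₗ[ℝ] G)
    (hbdd : eBilBdd (esumNorm iE₀ iE₁) (esumNorm iF₀ iF₁) (fun z : G => (‖z‖₊ : ℝ≥0∞))
      (fun x y => T x y))
    (hcpt : eBilCompact (enormOf iE₀) (enormOf iF₀) (fun z : G => (‖z‖₊ : ℝ≥0∞))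
      (fun x y => T x y))
    (p q : ℝ≥0∞) (hp : 1 ≤ p) (hq : 1 ≤ q) :
    eBilCompact (eJNorm iE₀ iE₁ (fun t => (rbar ρ t⁻¹)⁻¹) p) (eJNorm iF₀ iF₁ ρ q)
      (fun z : G => (‖z‖₊ : ℝ≥0∞)) (fun x y => T x y) := by
  obtain ⟨M, hM⟩ := hbdd
  obtain ⟨-, hP⟩ := aux_couple iE₀ iE₁ hE hAPE ρ hρ (fun t => (rbar ρ t⁻¹)⁻¹)
    (fun t ht => inv_pos.2 (aux_rbar_pos hρ.toIsClassB (inv_pos.2 ht)))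
    (fun t ht => aux_gamma_le hρ.toIsClassB ht) p hp
  obtain ⟨⟨B, hB⟩, hQ⟩ := aux_couple iF₀ iF₁ hF hAPF ρ hρ ρ hρ.pos
    (fun t ht => aux_rho_le hρ.toIsClassB ht) q hq
  intro ε hε
  lift ε to ℝ≥0 using hε.le
  have hε' : 0 < ε := hε
  obtain ⟨P, K, hPK⟩ := hP (ε / (4 * (M * B + 1))) (by positivity)
  obtain ⟨Q, K', hQK⟩ := hQ (ε / (4 * (M * K + 1))) (by positivity)
  set S : ℝ := (K + 1) * (K' + 1) with hS
  have hSpos : 0 < S := by positivity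
  obtain ⟨D, hD⟩ := hcpt (ε / 4 / S) (by positivity)
  classical
  refine ⟨D.image (fun z => S • z), fun x y hx hy => ?_⟩
  obtain ⟨hx1, hx2⟩ := hPK x hx
  obtain ⟨hy1, hy2⟩ := hQK y hy
  obtain ⟨d, hdD, hd⟩ := hD _ _ (aux_scale iE₀ hE.inj₀ _ _ hx2) (aux_scale iF₀ hF.inj₀ _ _ hy2)
  refine ⟨S • d, Finset.mem_image_of_mem _ hdD, ?_⟩
  have hd' : ‖T (P x) (Q y) - S • d‖ < ε / 4 := by
    have h1 : ‖T ((K + 1 : ℝ)⁻¹ • P x) ((K' + 1 : ℝ)⁻¹ • Q y) - d‖ < ε / 4 / S := by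
      have h3 : ENNReal.ofReal ‖T ((K + 1 : ℝ)⁻¹ • P x) ((K' + 1 : ℝ)⁻¹ • Q y) - d‖
        < ENNReal.ofReal (ε / 4 / S) := by rw [ofReal_norm]; exact hd
      exact (ENNReal.ofReal_lt_ofReal_iff (by positivity)).1 h3
    have h2 : T (P x) (Q y) - S • d
        = S • (T ((K + 1 : ℝ)⁻¹ • P x) ((K' + 1 : ℝ)⁻¹ • Q y) - d) := by
      rw [smul_sub, map_smul, map_smul, LinearMap.smul_apply, smul_smul, smul_smul]
      have : S * (K' + 1 : ℝ)⁻¹ * (K + 1 : ℝ)⁻¹ = 1 := by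
        rw [hS]
        have : (0:ℝ) ≤ K := K.2
        have : (0:ℝ) ≤ K' := K'.2
        field_simp
      rw [this, one_smul]
    rw [h2, norm_smul, Real.norm_of_nonneg hSpos.le]
    calc _ < S * (ε / 4 / S) := by gcongr
      _ = _ := by field_simp
  have b1 : ‖T (x - P x) y‖ ≤ ε / 4 := by
    have h1 : (‖T (x - P x) y‖₊ : ℝ≥0∞) ≤ M * (ε / (4 * (M * B + 1)) : ℝ≥0) * B :=
      (hM _ _).trans (mul_le_mul' (mul_le_mul' le_rfl hx1) (hB y hy))
    have h2 : ‖T (x - P x) y‖ ≤ M * (ε / (4 * (M * B + 1))) * B := by exact_mod_cast h1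
    refine h2.trans ?_
    have : (0:ℝ) ≤ M := M.2
    have : (0:ℝ) ≤ B := B.2
    rw [mul_div_assoc', div_mul_eq_mul_div, div_le_div_iff₀ (by positivity) (by positivity)]
    nlinarith [hε]
  have b2 : ‖T (P x) (y - Q y)‖ ≤ ε / 4 := by
    have h1 : (‖T (P x) (y - Q y)‖₊ : ℝ≥0∞) ≤ M * K * (ε / (4 * (M * K + 1)) : ℝ≥0) :=
      (hM _ _).trans (mul_le_mul' (mul_le_mul' le_rfl ((aux_sum_le₀ _ _ _).trans hx2)) hy1)
    have h2 : ‖T (P x) (y - Q y)‖ ≤ M * K * (ε / (4 * (M * K + 1))) := by exact_mod_cast h1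
    refine h2.trans ?_
    have : (0:ℝ) ≤ M := M.2
    have : (0:ℝ) ≤ K := K.2
    rw [mul_div_assoc', div_le_div_iff₀ (by positivity) (by positivity)]
    nlinarith [hε]
  have e : T x y - S • d = T (x - P x) y + T (P x) (y - Q y) + (T (P x) (Q y) - S • d) := by
    simp only [map_sub, LinearMap.sub_apply]
    abel
  have fin : ‖T x y - S • d‖ < ε := by
    rw [e]
    have := norm_add₃_le (a := T (x - P x) y) (b := T (P x) (y - Q y)) (c := T (P x) (Q y) - S • d)
    have : (0:ℝ) < ε := hε
    linarith
  have h9 : ENNReal.ofReal ‖T x y - S • d‖ < ENNReal.ofReal ε :=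
    (ENNReal.ofReal_lt_ofReal_iff hε).2 fin
  rw [ofReal_norm] at h9
  exact h9
end
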